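/- arXiv:1012.4951 — 2 statements merged into one kernel-verified Lean document; each statement's English description precedes it below -/
import Mathlib

section
/- Let U ⊆ ℂ be a nonempty open connected set, let f : U → ℂ be holomorphic with f'(z) ≠ 0 for every z ∈ U, let (m,n) be a pair of integers with (m,n) ≠ (0,0), and let c ∈ ℂ. If f'(z)^m · conj(f'(z))^n = c for all z ∈ U (integer powers of the nonzero complex number f'(z)), then f is affine on U: there exist a, b ∈ ℂ with a ≠ 0 such that f(z) = a·z + b for all z ∈ U. -/
open Complex

/-- If `w ↦ w ^ m * conj w ^ n` is constant near a nonzero point, its logarithmic derivative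
`m * u + n * conj u` in every direction `u` vanishes. -/
lemma mul_add_mul_conj_eq_zero_of_eventually_zpow_mul_conj_zpow_eq {m n : ℤ} {c w : ℂ}
    (hw : w ≠ 0)
    (h : ∀ᶠ z in nhds w, z ^ m * (starRingEnd ℂ z) ^ n = c) (u : ℂ) :
    m * u + n * starRingEnd ℂ u = 0 := by
  have hcurve : Filter.Tendsto (fun t : ℝ => w * exp (t * u)) (nhds 0) (nhds w) := by
    have hcont : Continuous fun t : ℝ => w * exp (t * u) := by fun_prop
    simpa using hcont.tendsto 0
  have hc : c ≠ 0 := by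
    rw [← h.self_of_nhds]
    exact mul_ne_zero (zpow_ne_zero _ hw) (zpow_ne_zero _ (by simpa using hw))
  have hexp : (fun t : ℝ => exp (t * (m * u + n * starRingEnd ℂ u))) =ᶠ[nhds 0] fun _ => 1 := by
    filter_upwards [hcurve.eventually h] with t ht
    rw [map_mul, mul_zpow, mul_zpow, mul_mul_mul_comm, h.self_of_nhds, ← exp_conj, map_mul,
      conj_ofReal, ← exp_int_mul, ← exp_int_mul, ← exp_add] at ht
    rw [← mul_right_eq_self₀.mp ht |>.resolve_right hc]
    ring_nf
  have hderiv : HasDerivAt (fun t : ℝ => exp (t * (m * u + n * starRingEnd ℂ u)))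
      (m * u + n * starRingEnd ℂ u) 0 := by
    simpa using ((hasDerivAt_id (0 : ℝ)).ofReal_comp.mul_const
      (m * u + n * starRingEnd ℂ u)).cexp
  exact hderiv.unique ((hasDerivAt_const (0 : ℝ) (1 : ℂ)).congr_of_eventuallyEq hexp)

/-- The function `w ↦ w ^ m * conj w ^ n` is locally constant at a nonzero point only if
`m = n = 0`. -/
lemma eq_zero_of_eventually_zpow_mul_conj_zpow_eq {m n : ℤ} {c w : ℂ} (hw : w ≠ 0)
    (h : ∀ᶠ z in nhds w, z ^ m * (starRingEnd ℂ z) ^ n = c) : m = 0 ∧ n = 0 := by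
  have hone := mul_add_mul_conj_eq_zero_of_eventually_zpow_mul_conj_zpow_eq hw h 1
  have hI := mul_add_mul_conj_eq_zero_of_eventually_zpow_mul_conj_zpow_eq hw h I
  have hadd : m + n = 0 := by
    simp only [map_one, mul_one] at hone
    exact_mod_cast hone
  have hsub : m - n = 0 := by
    rw [conj_I, mul_neg, ← sub_eq_add_neg, ← sub_mul] at hI
    exact_mod_cast (mul_eq_zero.mp hI).resolve_right I_ne_zero
  omega

/-- A holomorphic map on a nonempty open connected set that preserves the constant
`(m,n)`-differential `dz^m dz̄^n` up to a multiplicative constant is affine. -/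
theorem affine_of_preserves_constant_differential
    (U : Set ℂ) (hUne : U.Nonempty) (hUo : IsOpen U) (hUc : IsConnected U)
    (f : ℂ → ℂ) (hf : DifferentiableOn ℂ f U)
    (hf' : ∀ z ∈ U, deriv f z ≠ 0)
    (m n : ℤ) (hmn : (m, n) ≠ (0, 0)) (c : ℂ)
    (hinv : ∀ z ∈ U, (deriv f z) ^ m * (starRingEnd ℂ (deriv f z)) ^ n = c) :
    ∃ a b : ℂ, a ≠ 0 ∧ ∀ z ∈ U, f z = a * z + b := by
  obtain ⟨z₀, hz₀⟩ := hUne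
  rcases (hf.analyticOnNhd hUo).deriv.is_constant_or_isOpen hUc.isPreconnected with
    ⟨a, ha⟩ | hopen
  · have hlin (z : ℂ) : HasDerivAt (fun z => a * z) a z := by
      simpa using (hasDerivAt_id z).const_mul a
    refine ⟨a, f z₀ - a * z₀, ha z₀ hz₀ ▸ hf' z₀ hz₀, fun z hz => ?_⟩
    have hconst := hUo.is_const_of_deriv_eq_zero (f := fun z => f z - a * z) hUc.isPreconnected
      (hf.sub fun z _ => (hlin z).differentiableAt.differentiableWithinAt)
      (fun z hz => by
        have hfz := (hf.differentiableAt (hUo.mem_nhds hz)).hasDerivAt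
        exact (hfz.sub (hlin z)).deriv.trans (sub_eq_zero.mpr (ha z hz))) hz hz₀
    linear_combination hconst
  · have hnhds := (hopen U subset_rfl hUo).mem_nhds (Set.mem_image_of_mem _ hz₀)
    obtain ⟨rfl, rfl⟩ := eq_zero_of_eventually_zpow_mul_conj_zpow_eq (hf' z₀ hz₀)
      (Filter.mem_of_superset hnhds (Set.image_subset_iff.mpr hinv))
    exact absurd rfl hmn
end

section
/- Let V ⊆ ℂ be a nonempty open connected set and let Ψ : V → ℂ be holomorphic. Assume that Ψ admits no proper analytic continuation: for every open connected set V' ⊆ ℂ with V ⊊ V' there is no holomorphic function g : V' → ℂ with g(z) = Ψ(z) for all z ∈ V. Let α, β ∈ ℂ with α ≠ 0, write γ(z) = α·z + β, and assume γ(V) ∩ V ≠ ∅ and Ψ(γ(z)) = Ψ(z) for every z ∈ V with γ(z) ∈ V. Then γ(V) = V. -/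
open Complex

/-- A domain `V` beyond which `Ψ` has no analytic continuation contains every domain `U` meeting `V`
that carries a holomorphic function agreeing with `Ψ` on `U ∩ V`. -/
theorem subset_of_no_analytic_continuation {U V : Set ℂ} {Ψ h : ℂ → ℂ}
    (hVo : IsOpen V) (hVc : IsConnected V) (hΨ : DifferentiableOn ℂ Ψ V)
    (hmax : ∀ V' : Set ℂ, IsOpen V' → IsConnected V' → V ⊂ V' →
      ¬ ∃ g : ℂ → ℂ, DifferentiableOn ℂ g V' ∧ ∀ z ∈ V, g z = Ψ z)
    (hUo : IsOpen U) (hUc : IsConnected U) (hUV : (V ∩ U).Nonempty)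
    (hh : DifferentiableOn ℂ h U) (heq : ∀ z ∈ U, z ∈ V → h z = Ψ z) :
    U ⊆ V := by
  classical
  by_contra hsub
  have hss : V ⊂ V ∪ U :=
    ⟨Set.subset_union_left, fun H => hsub (Set.subset_union_right.trans H)⟩
  refine hmax (V ∪ U) (hVo.union hUo) (hVc.union hUV hUc) hss
    ⟨V.piecewise Ψ h, ?_, fun z hz => Set.piecewise_eq_of_mem _ _ _ hz⟩
  refine DifferentiableOn.union_of_isOpen ?_ ?_ hVo hUo
  · exact hΨ.congr fun z hz => Set.piecewise_eq_of_mem _ _ _ hz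
  · refine hh.congr fun z hz => ?_
    by_cases hzV : z ∈ V
    · rw [Set.piecewise_eq_of_mem _ _ _ hzV, heq z hz hzV]
    · exact Set.piecewise_eq_of_notMem _ _ _ hzV

/-- Claim 1: the maximal domain `V` of `Ψ` is stable under every affine deck
transformation `γ(z) = α z + β`. -/
theorem domain_stable_under_deck_transformation
    (V : Set ℂ) (hVne : V.Nonempty) (hVo : IsOpen V) (hVc : IsConnected V)
    (Ψ : ℂ → ℂ) (hΨ : DifferentiableOn ℂ Ψ V)
    (hmax : ∀ V' : Set ℂ, IsOpen V' → IsConnected V' → V ⊂ V' →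
      ¬ ∃ g : ℂ → ℂ, DifferentiableOn ℂ g V' ∧ ∀ z ∈ V, g z = Ψ z)
    (α β : ℂ) (hα : α ≠ 0)
    (hmeet : ((fun z => α * z + β) '' V ∩ V).Nonempty)
    (hdeck : ∀ z ∈ V, α * z + β ∈ V → Ψ (α * z + β) = Ψ z) :
    (fun z => α * z + β) '' V = V := by
  have hinv : ∀ z, α * (α⁻¹ * (z - β)) + β = z := fun z => by field_simp; ring
  have hinv' : ∀ z, α⁻¹ * (α * z + β - β) = z := fun z => by field_simp; ring
  have himage : (fun z => α * z + β) '' V = (fun z => α⁻¹ * (z - β)) ⁻¹' V :=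
    congrFun (Set.image_eq_preimage_of_inverse
      (f := fun z => α * z + β) (g := fun z => α⁻¹ * (z - β)) hinv' hinv) V
  have hpreimage : (fun z => α⁻¹ * (z - β)) '' V = (fun z => α * z + β) ⁻¹' V :=
    congrFun (Set.image_eq_preimage_of_inverse
      (f := fun z => α⁻¹ * (z - β)) (g := fun z => α * z + β) hinv hinv') V
  have hγ : Continuous fun z : ℂ => α * z + β := by fun_prop
  have hγinv : Continuous fun z : ℂ => α⁻¹ * (z - β) := by fun_prop
  obtain ⟨-, ⟨w, hw, rfl⟩, hγw⟩ := hmeet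
  apply Set.Subset.antisymm
  · refine subset_of_no_analytic_continuation (h := fun z => Ψ (α⁻¹ * (z - β)))
      hVo hVc hΨ hmax (himage ▸ hVo.preimage hγinv) (hVc.image _ hγ.continuousOn)
      ⟨_, hγw, w, hw, rfl⟩ ?_ ?_
    · rw [himage]
      exact hΨ.comp (t := V) (by fun_prop) fun z hz => hz
    · rintro - ⟨z, hz, rfl⟩ hγz
      simp only [hinv']
      exact (hdeck z hz hγz).symm
  · have hsub : (fun z => α * z + β) ⁻¹' V ⊆ V :=
      subset_of_no_analytic_continuation (h := fun z => Ψ (α * z + β))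
        hVo hVc hΨ hmax (hVo.preimage hγ) (hpreimage ▸ hVc.image _ hγinv.continuousOn)
        ⟨w, hw, hγw⟩ (hΨ.comp (t := V) (by fun_prop) fun z hz => hz)
        fun z hγz hz => hdeck z hz hγz
    intro z hz
    refine ⟨α⁻¹ * (z - β), hsub ?_, hinv z⟩
    simpa only [Set.mem_preimage, hinv] using hz
end
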